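/- Let U be a unitary matrix on ℂ^A ⊗ ℂ^B (A, B finite nonempty types). The unitary channel X ↦ U X U† is causal if and only if U is a product unitary, i.e., there exist a unitary U_A on ℂ^A and a unitary U_B on ℂ^B with U = U_A ⊗ U_B. In particular every non-product unitary transformation is signalling. -/

import Mathlib

open Matrix BigOperators
open scoped Kronecker ComplexOrder

noncomputable section

/-- Partial trace over the `A` factor. -/
def trA {A B : Type*} [Fintype A] (ρ : Matrix (A × B) (A × B) ℂ) : Matrix B B ℂ :=
  Matrix.of fun b b' => ∑ a, ρ (a, b) (a, b')

/-- Partial trace over the `B` factor. -/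
def trB {A B : Type*} [Fintype B] (ρ : Matrix (A × B) (A × B) ℂ) : Matrix A A ℂ :=
  Matrix.of fun a a' => ∑ b, ρ (a, b) (a', b)

/-- A state: positive semidefinite matrix of trace 1. -/
def IsState {n : Type*} [Fintype n] (ρ : Matrix n n ℂ) : Prop :=
  ρ.PosSemidef ∧ ρ.trace = 1

/-- A channel: a map admitting a Kraus representation `Λ[X] = ∑ i, K i * X * (K i)ᴴ`
with `∑ i, (K i)ᴴ * K i = 1` (completely positive and trace-preserving). -/
def IsChannel {n : Type*} [Fintype n] [DecidableEq n]
    (Λ : Matrix n n ℂ → Matrix n n ℂ) : Prop :=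
  ∃ (m : ℕ) (K : Fin m → Matrix n n ℂ),
    (∀ X, Λ X = ∑ i, K i * X * (K i)ᴴ) ∧ (∑ i, (K i)ᴴ * K i = 1)

/-- The induced map `Γ ⊗ id` on the bipartite system, acting blockwise. -/
def tensIdA {A B : Type*} (Γ : Matrix A A ℂ → Matrix A A ℂ)
    (ρ : Matrix (A × B) (A × B) ℂ) : Matrix (A × B) (A × B) ℂ :=
  Matrix.of fun p q => Γ (Matrix.of fun a a' => ρ (a, p.2) (a', q.2)) p.1 q.1

/-- The induced map `id ⊗ Γ` on the bipartite system, acting blockwise. -/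
def tensIdB {A B : Type*} (Γ : Matrix B B ℂ → Matrix B B ℂ)
    (ρ : Matrix (A × B) (A × B) ℂ) : Matrix (A × B) (A × B) ℂ :=
  Matrix.of fun p q => Γ (Matrix.of fun b b' => ρ (p.1, b) (q.1, b')) p.2 q.2

/-- `Λ` is A↛B semicausal: no channel applied by Alice beforehand affects Bob's
reduced output state. -/
def SemicausalAtoB {A B : Type*} [Fintype A] [Fintype B] [DecidableEq A]
    (Λ : Matrix (A × B) (A × B) ℂ → Matrix (A × B) (A × B) ℂ) : Prop :=
  ∀ ρ : Matrix (A × B) (A × B) ℂ, IsState ρ →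
    ∀ Γ : Matrix A A ℂ → Matrix A A ℂ, IsChannel Γ →
      trA (Λ (tensIdA Γ ρ)) = trA (Λ ρ)

/-- `Λ` is A↚B semicausal: no channel applied by Bob beforehand affects Alice's
reduced output state. -/
def SemicausalBtoA {A B : Type*} [Fintype A] [Fintype B] [DecidableEq B]
    (Λ : Matrix (A × B) (A × B) ℂ → Matrix (A × B) (A × B) ℂ) : Prop :=
  ∀ ρ : Matrix (A × B) (A × B) ℂ, IsState ρ →
    ∀ Γ : Matrix B B ℂ → Matrix B B ℂ, IsChannel Γ →
      trB (Λ (tensIdB Γ ρ)) = trB (Λ ρ)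

/-- `Λ` is causal: both A↛B and A↚B semicausal. -/
def Causal {A B : Type*} [Fintype A] [Fintype B] [DecidableEq A] [DecidableEq B]
    (Λ : Matrix (A × B) (A × B) ℂ → Matrix (A × B) (A × B) ℂ) : Prop :=
  SemicausalAtoB Λ ∧ SemicausalBtoA Λ

theorem chan_trace {n : Type*} [Fintype n] [DecidableEq n]
    (Γ : Matrix n n ℂ → Matrix n n ℂ) (h : IsChannel Γ) (X : Matrix n n ℂ) :
    (Γ X).trace = X.trace := by
  obtain ⟨m, K, h1, h2⟩ := h
  rw [h1, Matrix.trace_sum]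
  have : ∀ i, (K i * X * (K i)ᴴ).trace = ((K i)ᴴ * K i * X).trace := by
    intro i
    rw [Matrix.trace_mul_comm, Matrix.mul_assoc]
  simp_rw [this]
  rw [← Matrix.trace_sum, ← Finset.sum_mul, h2, one_mul]

theorem trA_tensIdA {A B : Type*} [Fintype A] [DecidableEq A]
    (Γ : Matrix A A ℂ → Matrix A A ℂ) (h : IsChannel Γ) (ρ : Matrix (A × B) (A × B) ℂ) :
    trA (tensIdA Γ ρ) = trA ρ := by
  ext b b'
  exact chan_trace Γ h (Matrix.of fun a a' => ρ (a, b) (a', b'))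

theorem trB_tensIdB {A B : Type*} [Fintype B] [DecidableEq B]
    (Γ : Matrix B B ℂ → Matrix B B ℂ) (h : IsChannel Γ) (ρ : Matrix (A × B) (A × B) ℂ) :
    trB (tensIdB Γ ρ) = trB ρ := by
  ext b b'
  exact chan_trace Γ h (Matrix.of fun a a' => ρ (b, a) (b', a'))

theorem unit_entry {A : Type*} [Fintype A] [DecidableEq A] {V : Matrix A A ℂ}
    (hV : V ∈ Matrix.unitaryGroup A ℂ) (c d : A) :
    ∑ a, V a c * star (V a d) = if c = d then 1 else 0 := by
  have h := congrFun (congrFun ((Matrix.mem_unitaryGroup_iff').1 hV) d) c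
  rw [Matrix.mul_apply, Matrix.one_apply] at h
  simp only [Matrix.star_apply] at h
  simp_rw [mul_comm (V _ _), h, eq_comm]

theorem conj_entry {n : Type*} [Fintype n] (U X : Matrix n n ℂ) (p q : n) :
    (U * X * Uᴴ) p q = ∑ s, ∑ t, U p s * X s t * star (U q t) := by
  rw [Matrix.mul_apply, Finset.sum_comm]
  simp only [Matrix.mul_apply, Finset.sum_mul, Matrix.conjTranspose_apply]

theorem trA_conj {A B : Type*} [Fintype A] [Fintype B] [DecidableEq A]
    (UA : Matrix A A ℂ) (UB : Matrix B B ℂ) (hA : UA ∈ Matrix.unitaryGroup A ℂ)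
    (X : Matrix (A × B) (A × B) ℂ) :
    trA ((UA ⊗ₖ UB) * X * (UA ⊗ₖ UB)ᴴ) = UB * trA X * UBᴴ := by
  ext b b'
  rw [conj_entry]
  simp only [trA, Matrix.of_apply, conj_entry, Fintype.sum_prod_type, Matrix.kroneckerMap_apply]
  have e : ∀ a c β d δ, UA a c * UB b β * X (c, β) (d, δ) * star (UA a d * UB b' δ)
      = (UA a c * star (UA a d)) * (UB b β * X (c, β) (d, δ) * star (UB b' δ)) := by
    intros; rw [star_mul']; ring
  simp_rw [e]
  calc _ = ∑ c, ∑ β, ∑ d, ∑ δ, ∑ a, (UA a c * star (UA a d)) * (UB b β * X (c, β) (d, δ) * star (UB b' δ)) := by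
        rw [Finset.sum_comm]; refine Finset.sum_congr rfl fun c _ => ?_
        rw [Finset.sum_comm]; refine Finset.sum_congr rfl fun β _ => ?_
        rw [Finset.sum_comm]; refine Finset.sum_congr rfl fun d _ => ?_
        rw [Finset.sum_comm]
    _ = ∑ c, ∑ β, ∑ δ, UB b β * X (c, β) (c, δ) * star (UB b' δ) := by
        simp_rw [← Finset.sum_mul, unit_entry hA]
        refine Finset.sum_congr rfl fun c _ => Finset.sum_congr rfl fun β _ => ?_
        rw [Finset.sum_comm]
        simp
    _ = _ := by
        rw [Finset.sum_comm]; refine Finset.sum_congr rfl fun β _ => ?_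
        rw [Finset.sum_comm]; refine Finset.sum_congr rfl fun δ _ => ?_
        rw [Finset.mul_sum, Finset.sum_mul]

theorem trB_conj {A B : Type*} [Fintype A] [Fintype B] [DecidableEq B]
    (UA : Matrix A A ℂ) (UB : Matrix B B ℂ) (hB : UB ∈ Matrix.unitaryGroup B ℂ)
    (X : Matrix (A × B) (A × B) ℂ) :
    trB ((UA ⊗ₖ UB) * X * (UA ⊗ₖ UB)ᴴ) = UA * trB X * UAᴴ := by
  have h := trA_conj UB UA hB (X.submatrix Prod.swap Prod.swap)
  have h2 : trA (X.submatrix Prod.swap Prod.swap) = trB X := rfl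
  rw [h2] at h
  rw [← h]
  ext a a'
  simp only [trA, trB, Matrix.of_apply]
  refine Finset.sum_congr rfl fun b _ => ?_
  rw [conj_entry, conj_entry, ← (Equiv.prodComm A B).sum_comp]
  refine Finset.sum_congr rfl fun s _ => ?_
  rw [← (Equiv.prodComm A B).sum_comp]
  refine Finset.sum_congr rfl fun t _ => ?_
  simp [Matrix.kroneckerMap_apply, mul_comm, mul_left_comm]

/-- The replacement channel. -/
theorem repl_channel {A : Type*} [Fintype A] [DecidableEq A] (a0 : A) :
    IsChannel (fun X : Matrix A A ℂ => X.trace • Matrix.single a0 a0 (1 : ℂ)) := by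
  refine ⟨Fintype.card A, fun i => Matrix.single a0 ((Fintype.equivFin A).symm i) 1, ?_, ?_⟩
  · intro X
    rw [(Fintype.equivFin A).symm.sum_comp
      (fun a => Matrix.single a0 a (1:ℂ) * X * (Matrix.single a0 a (1:ℂ))ᴴ)]
    simp [Matrix.trace, Finset.sum_smul, Matrix.conjTranspose_single]
  · rw [(Fintype.equivFin A).symm.sum_comp
      (fun a => (Matrix.single a0 a (1:ℂ))ᴴ * (Matrix.single a0 a (1:ℂ)))]
    simp only [Matrix.conjTranspose_single, star_one, Matrix.single_mul_single_same, mul_one]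
    ext i j
    simp [Matrix.sum_apply, Matrix.single_apply, Matrix.one_apply, ite_and]

/-- A linear map vanishing on states vanishes. -/
theorem lin_states {n : Type*} [Fintype n] [DecidableEq n] {M : Type*} [AddCommGroup M] [Module ℂ M]
    (F : Matrix n n ℂ →ₗ[ℂ] M) (hF : ∀ ρ, IsState ρ → F ρ = 0) : F = 0 := by
  have h1 : ∀ v : n → ℂ, F (Matrix.vecMulVec v (star v)) = 0 := by
    intro v
    by_cases hv : v = 0
    · subst hv; simp
    have hp : (Matrix.vecMulVec v (star v)).PosSemidef := Matrix.posSemidef_vecMulVec_self_star v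
    have hr : (Matrix.vecMulVec v (star v)).trace ≠ 0 := by
      rw [Matrix.trace_vecMulVec]
      simpa using hv
    set r := (Matrix.vecMulVec v (star v)).trace with hrd
    have hr0 : 0 ≤ r := hp.trace_nonneg
    have := hF (r⁻¹ • Matrix.vecMulVec v (star v)) ⟨hp.smul (by
      exact inv_nonneg.2 hr0), by
        rw [Matrix.trace_smul, ← hrd, smul_eq_mul, inv_mul_cancel₀ hr]⟩
    rw [map_smul] at this
    exact (smul_eq_zero.1 this).resolve_left (inv_ne_zero hr)
  have h2 : ∀ x y : n → ℂ, F (Matrix.vecMulVec x (star y)) = 0 := by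
    intro x y
    have ea := h1 (x + y)
    have eb := h1 (x + Complex.I • y)
    have ex := h1 x
    have ey := h1 y
    simp only [star_add, star_smul, Matrix.add_vecMulVec, Matrix.vecMulVec_add, Matrix.smul_vecMulVec,
      Matrix.vecMulVec_smul, map_add, map_smul, ex, ey] at ea eb
    simp only [zero_add, add_zero, smul_zero, Complex.star_def, Complex.conj_I] at ea eb
    have e3 : F (Matrix.vecMulVec y (star x)) = - F (Matrix.vecMulVec x (star y)) := by
      exact eq_neg_of_add_eq_zero_left ea
    rw [e3, smul_neg, ← neg_smul, ← add_smul] at eb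
    refine (smul_eq_zero.1 eb).resolve_left ?_
    intro h
    have := congrArg Complex.im h
    norm_num at this
  refine LinearMap.ext fun X => ?_
  rw [Matrix.matrix_eq_sum_single X, map_sum]
  refine Finset.sum_eq_zero fun i _ => ?_
  rw [map_sum]
  refine Finset.sum_eq_zero fun j _ => ?_
  have : Matrix.single i j (X i j) = X i j • Matrix.vecMulVec (Pi.single i 1) (star (Pi.single j (1:ℂ))) := by
    ext p q
    simp [Matrix.single_apply, Matrix.vecMulVec_apply, Pi.single_apply, ite_and, eq_comm]
    try aesop
  rw [this, map_smul, h2, smul_zero]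

theorem key_entry {A B : Type*} [Fintype A] [Fintype B] [DecidableEq A] [DecidableEq B]
    (U : Matrix (A × B) (A × B) ℂ) (h : SemicausalAtoB (fun X => U * X * Uᴴ)) (a0 : A)
    (c d : A) (β δ b b' : B) :
    ∑ a, U (a, b) (c, β) * star (U (a, b') (d, δ)) =
      if c = d then ∑ a, U (a, b) (a0, β) * star (U (a, b') (a0, δ)) else 0 := by
  let Γ := fun X : Matrix A A ℂ => X.trace • Matrix.single a0 a0 (1 : ℂ)
  let F : Matrix (A × B) (A × B) ℂ →ₗ[ℂ] Matrix B B ℂ :=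
    { toFun := fun ρ => trA (U * tensIdA Γ ρ * Uᴴ) - trA (U * ρ * Uᴴ)
      map_add' := by
        intro x y
        ext p q
        simp only [trA, tensIdA, conj_entry, Γ, Matrix.trace, Matrix.sub_apply, Matrix.add_apply,
          Matrix.smul_apply, Matrix.of_apply, Matrix.diag_apply, smul_eq_mul,
          Finset.sum_add_distrib, mul_add, add_mul]
        ring
      map_smul' := by
        intro r x
        ext p q
        simp only [trA, tensIdA, conj_entry, Γ, Matrix.trace, Finset.mul_sum, Matrix.sub_apply, mul_sub,
          Matrix.smul_apply, Matrix.of_apply, Matrix.diag_apply, smul_eq_mul, RingHom.id_apply,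
          Finset.sum_mul]
        congr 1 <;> (repeat (refine Finset.sum_congr rfl fun _ _ => ?_)) <;> ring }
  have hF : F = 0 := lin_states F fun ρ hρ => sub_eq_zero.2 (h ρ hρ Γ (repl_channel a0))
  have h1 : trA (U * tensIdA Γ (Matrix.single (c, β) (d, δ) 1) * Uᴴ)
      = trA (U * (Matrix.single (c, β) (d, δ) 1) * Uᴴ) :=
    sub_eq_zero.1 (LinearMap.congr_fun hF (Matrix.single (c, β) (d, δ) 1))
  have h2 : tensIdA Γ (Matrix.single (c, β) (d, δ) 1)
      = if c = d then Matrix.single (a0, β) (a0, δ) (1:ℂ) else 0 := by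
    ext ⟨p, p'⟩ ⟨q, q'⟩
    by_cases hcd : c = d
    · subst hcd
      simp [tensIdA, Γ, Matrix.trace, Matrix.single_apply, ite_and]
      split_ifs <;> simp_all
    · simp [tensIdA, Γ, Matrix.trace, Matrix.single_apply, ite_and, hcd]
      intro _ _ _ hdc
      exact absurd hdc.symm hcd
  have h3 : ∀ s t, trA (U * (Matrix.single s t 1) * Uᴴ) b b'
      = ∑ a, U (a, b) s * star (U (a, b') t) := by
    intro s t
    simp only [trA, Matrix.of_apply, conj_entry]
    refine Finset.sum_congr rfl fun a _ => ?_
    rw [Finset.sum_eq_single s, Finset.sum_eq_single t]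
    · simp
    · intro x _ hx; simp [Matrix.single_apply, hx.symm]
    · simp
    · intro x _ hx; simp [Matrix.single_apply, hx.symm]
    · simp
  have h4 := congrFun (congrFun h1 b) b'
  rw [h3, h2] at h4
  rw [← h4]
  split_ifs
  · rw [h3]
  · simp [trA]

theorem key_scalar {A B : Type*} [Fintype A] [Fintype B] [DecidableEq A] [DecidableEq B]
    (U : Matrix (A × B) (A × B) ℂ) (hU : U ∈ Matrix.unitaryGroup (A × B) ℂ)
    (G : B → B → B → B → ℂ)
    (h : ∀ c d β δ b b', ∑ a, U (a, b) (c, β) * star (U (a, b') (d, δ)) =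
      if c = d then G b b' β δ else 0)
    (hG : ∀ b b' β δ, star (G b b' β δ) = G b' b δ β)
    (x c x' c' : A) (b b' b'' y : B) :
    (if b' = y then ∑ β, U (x, b) (c, β) * star (U (x', b'') (c', β)) else 0) =
      if b = b'' then ∑ δ, U (x, y) (c, δ) * star (U (x', b') (c', δ)) else 0 := by
  have h1 : ∀ x c b b' y β, (if b' = y then U (x, b) (c, β) else 0)
      = ∑ δ, G b b' β δ * U (x, y) (c, δ) := by
    intro x c b b' y β
    have hu : ∀ p q, ∑ s, U p s * star (U q s) = if p = q then 1 else 0 := by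
      intro p q
      have := congrFun (congrFun ((Matrix.mem_unitaryGroup_iff).1 hU) p) q
      rw [Matrix.mul_apply, Matrix.one_apply] at this
      simpa [Matrix.star_apply] using this
    have e1 : ∑ s : A × B, (∑ a, U (a, b) (c, β) * star (U (a, b') s)) * U (x, y) s
        = if b' = y then U (x, b) (c, β) else 0 := by
      simp_rw [Finset.sum_mul]
      rw [Finset.sum_comm]
      have : ∀ a, ∑ s, U (a, b) (c, β) * star (U (a, b') s) * U (x, y) s
          = U (a, b) (c, β) * if (x, y) = (a, b') then 1 else 0 := by
        intro a
        rw [← hu, Finset.mul_sum]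
        refine Finset.sum_congr rfl fun s _ => by ring
      simp_rw [this]
      by_cases hy : b' = y
      · subst hy; simp
      · have : y ≠ b' := fun h => hy h.symm
        simp [hy, this]
    rw [← e1, Fintype.sum_prod_type]
    simp_rw [h]
    simp only [ite_mul, zero_mul]
    rw [Finset.sum_comm]
    simp
  have h2 : ∀ δ, (if b = b'' then star (U (x', b') (c', δ)) else 0)
      = ∑ β, G b b' β δ * star (U (x', b'') (c', β)) := by
    intro δ
    have := congrArg star (h1 x' c' b' b b'' δ)
    rw [star_sum] at this
    simp only [star_mul', hG] at this
    rw [← this]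
    split_ifs <;> simp
  calc _ = ∑ β, (if b' = y then U (x, b) (c, β) else 0) * star (U (x', b'') (c', β)) := by
        split_ifs <;> simp
    _ = ∑ δ, U (x, y) (c, δ) * ∑ β, G b b' β δ * star (U (x', b'') (c', β)) := by
        simp_rw [h1, Finset.sum_mul, Finset.mul_sum]
        rw [Finset.sum_comm]
        refine Finset.sum_congr rfl fun δ _ => Finset.sum_congr rfl fun β _ => by ring
    _ = _ := by
        simp_rw [← h2]
        split_ifs <;> simp

theorem product_of {A B : Type*} [Fintype A] [Fintype B] [DecidableEq A] [DecidableEq B]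
    [Nonempty A] [Nonempty B]
    (U : Matrix (A × B) (A × B) ℂ) (hU : U ∈ Matrix.unitaryGroup (A × B) ℂ)
    (h : SemicausalAtoB (fun X => U * X * Uᴴ)) :
      ∃ (UA : Matrix A A ℂ) (UB : Matrix B B ℂ),
        UA ∈ Matrix.unitaryGroup A ℂ ∧ UB ∈ Matrix.unitaryGroup B ℂ ∧
          U = UA ⊗ₖ UB := by
  obtain ⟨a0⟩ := ‹Nonempty A›
  obtain ⟨b0⟩ := ‹Nonempty B›
  have key := key_scalar U hU _ (key_entry U h a0) (by
    intro b b' β δ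
    simp [star_sum, mul_comm])
  let P : A → A → Matrix B B ℂ := fun x c => Matrix.of fun b β => U (x, b) (c, β)
  have hP : ∀ x c x' c', ∃ l : ℂ, P x c * (P x' c')ᴴ = l • 1 := by
    intro x c x' c'
    refine ⟨(P x c * (P x' c')ᴴ) b0 b0, ?_⟩
    ext b b''
    have := key x c x' c' b b0 b'' b0
    simp only [if_true] at this
    simpa [Matrix.mul_apply, P, Matrix.one_apply] using this
  choose l hl using hP
  have hne : ∃ x c, P x c ≠ 0 := by
    by_contra! hcon
    have hz : U = 0 := by
      ext ⟨x, b⟩ ⟨c, β⟩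
      exact congrFun (congrFun (hcon x c) b) β
    have := congrFun (congrFun ((Matrix.mem_unitaryGroup_iff).1 hU) (a0, b0)) (a0, b0)
    simp [hz] at this
  obtain ⟨x0, c0, hQ⟩ := hne
  set Q := P x0 c0 with hQd
  have hQQ : Q * Qᴴ = l x0 c0 x0 c0 • 1 := hl x0 c0 x0 c0
  set m := l x0 c0 x0 c0
  have hm0 : m ≠ 0 := by
    intro h0
    rw [h0, zero_smul] at hQQ
    exact hQ (Matrix.self_mul_conjTranspose_eq_zero.1 hQQ)
  have hmn : 0 ≤ m := by
    have := (Matrix.posSemidef_self_mul_conjTranspose Q).diag_nonneg (i := b0)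
    rw [hQQ] at this
    simpa using this
  obtain ⟨s, hs, hs0⟩ : ∃ s : ℝ, (s : ℂ) * s = m ∧ s ≠ 0 := by
    have hre := (Complex.nonneg_iff.1 hmn)
    have hmr : m = (m.re : ℂ) := Complex.ext rfl (by simp [← hre.2])
    refine ⟨Real.sqrt m.re, ?_, ?_⟩
    · rw [← Complex.ofReal_mul, Real.mul_self_sqrt hre.1, ← hmr]
    · rw [Real.sqrt_ne_zero hre.1]
      intro h0
      exact hm0 (by rw [hmr, h0]; simp)
  have hsc : (s : ℂ) ≠ 0 := by exact_mod_cast hs0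
  let V : Matrix B B ℂ := (s : ℂ)⁻¹ • Q
  have hV : V ∈ Matrix.unitaryGroup B ℂ := by
    rw [Matrix.mem_unitaryGroup_iff, Matrix.star_eq_conjTranspose, Matrix.conjTranspose_smul,
      Matrix.smul_mul, Matrix.mul_smul, hQQ, ← hs, smul_smul, smul_smul]
    have e1 : star (s : ℂ)⁻¹ * ((s : ℂ)⁻¹ * ((s : ℂ) * s)) = 1 := by
      simp [hsc]
    rw [show ∀ z : ℂ, z = 1 → z • (1 : Matrix B B ℂ) = 1 from fun z hz => by rw [hz, one_smul]]
    have e2 : star (s : ℂ)⁻¹ = (s : ℂ)⁻¹ := by simp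
    rw [e2]
    field_simp
  let W : Matrix A A ℂ := Matrix.of fun x c => (s : ℂ)⁻¹ * l x c x0 c0
  have hUW : U = W ⊗ₖ V := by
    have hPV : ∀ x c, P x c = W x c • V := by
      intro x c
      have e : P x c * Vᴴ * V = P x c := by
        rw [Matrix.mul_assoc, ← Matrix.star_eq_conjTranspose, (Matrix.mem_unitaryGroup_iff').1 hV,
          Matrix.mul_one]
      rw [← e]
      simp only [V, W, Matrix.conjTranspose_smul, Matrix.mul_smul, hl, Matrix.of_apply, hQd]
      simp [smul_smul, mul_comm, mul_left_comm]
    ext ⟨x, b⟩ ⟨c, β⟩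
    exact congrFun (congrFun (hPV x c) b) β
  refine ⟨W, V, ?_, hV, hUW⟩
  have h1 := (Matrix.mem_unitaryGroup_iff).1 hU
  rw [Matrix.mem_unitaryGroup_iff] at hV ⊢
  rw [Matrix.star_eq_conjTranspose] at h1 hV ⊢
  rw [hUW, Matrix.conjTranspose_kronecker, ← Matrix.mul_kronecker_mul, hV] at h1
  ext x y
  have := congrFun (congrFun h1 (x, b0)) (y, b0)
  simpa [Matrix.kroneckerMap_apply, Matrix.one_apply] using this

/-- a unitary channel is causal iff the unitary is a product unitary
`U = U_A ⊗ U_B`; in particular every non-product unitary is signalling. -/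
theorem stmt_11 {A B : Type*} [Fintype A] [Fintype B] [DecidableEq A] [DecidableEq B]
    [Nonempty A] [Nonempty B]
    (U : Matrix (A × B) (A × B) ℂ) (hU : U ∈ Matrix.unitaryGroup (A × B) ℂ) :
    Causal (fun X => U * X * Uᴴ) ↔
      ∃ (UA : Matrix A A ℂ) (UB : Matrix B B ℂ),
        UA ∈ Matrix.unitaryGroup A ℂ ∧ UB ∈ Matrix.unitaryGroup B ℂ ∧
          U = UA ⊗ₖ UB := by
  constructor
  · intro h
    exact product_of U hU h.1
  · rintro ⟨UA, UB, hA, hB, rfl⟩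
    constructor
    · intro ρ _ Γ hΓ
      simp only [trA_conj UA UB hA, trA_tensIdA Γ hΓ]
    · intro ρ _ Γ hΓ
      simp only [trB_conj UA UB hB, trB_tensIdB Γ hΓ]
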